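/- arXiv:1302.1038 — 2 statements merged into one kernel-verified Lean document; each statement's English description precedes it below -/
import Mathlib

section
/- (Example 1, case c = -1) Assume the ladder system with parameters k₁ = 1 - q^{-α}, k₂ = q^{1-α}, k₃ = 0, where α > 0. Then for every n ≥ 1 satisfying the nondegeneracy conditions and D_n := r_{n-1}(qⁿ - 1 - r_n) + (qⁿ - 1)(r_n + k₁) ≠ 0, the sequence r_n satisfies r_n² (r_n + 1 - q^{-α})² = q^{-2n} (r_n + 1 - qⁿ)² ((r_n + 1)(r_{n+1} + 1) - q^{-α}) ((r_n + 1)(r_{n-1} + 1) - q^{-α}). -/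
/-!
Two combinations of the ladder relations telescope. Multiplying (iii) by `R n` and inserting (i)
gives `a (n + 1) ^ 2 * R (n + 1) * R n = r (n + 1) * (r (n + 1) + k₁)`. The difference of (ii) at
`n + 1` and `n` evaluates `k₂ * (b (n + 1) - q * b n)`; multiplied by `1 + r (n + 1)` and combined
with (iii) at `n + 1`, it evaluates the increment of `q⁻¹ ^ n * k₂ * b n * (1 + r (n + 1))`, which
sums to an expression linear in `R n` and `R (n + 1)`. Since (iv) sums to a closed
form for `k₂ * a n ^ 2`, eliminating `a` and `b` expresses both `R n * R (n + 1)` and, when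
`k₃ = 0`, each `R n ^ 2` through `r` alone. The claim is
`(R n * R (n + 1)) ^ 2 = R n ^ 2 * R (n + 1) ^ 2` written in terms of `r`.
-/

/-- The ladder relations (i)–(iv) with the initial values `a 0 = r 0 = 0`, over an arbitrary field.
Relation (iii) is split into its case `n = 0`, which has no term `R (-1)`, and its case `n + 1`.
For `q = 0` the quotient in (ii) is a junk value. -/
structure LadderSystem {K : Type*} [Field K] (q k₁ k₂ k₃ : K) (a b r R : ℕ → K) : Prop where
  a_zero : a 0 = 0
  r_zero : r 0 = 0
  r_succ_add_r : ∀ n, r (n + 1) + r n = -(b n * R n) - k₁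
  R_sub_sum : ∀ n, R n - k₂ * b n / q ^ n - k₃ - (1 - q) * ∑ j ∈ Finset.range (n + 1), R j = 0
  a_one_sq_mul_R : a 1 ^ 2 * R 1 = -(b 0 * (r 1 - r 0))
  a_sq_mul_R_sub : ∀ n,
    a (n + 2) ^ 2 * R (n + 2) - a (n + 1) ^ 2 * R n = -(b (n + 1) * (r (n + 2) - r (n + 1)))
  a_sq_sub : ∀ n,
    k₂ * a (n + 1) ^ 2 - k₂ * q ^ 2 * a n ^ 2 =
      q ^ (1 + n) - q ^ (2 + n) - q ^ (2 + n) * r n + q ^ (1 + n) * r (n + 1)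

namespace LadderSystem

variable {K : Type*} [Field K] {q k₁ k₂ k₃ : K} {a b r R : ℕ → K}

theorem k₂_mul_a_sq (h : LadderSystem q k₁ k₂ k₃ a b r R) (n : ℕ) :
    k₂ * a n ^ 2 = q ^ n * (1 - q ^ n + r n) := by
  induction n with
  | zero => simp [h.a_zero, h.r_zero]
  | succ n ih => linear_combination h.a_sq_sub n + q ^ 2 * ih

theorem a_sq_mul_R_mul_R (h : LadderSystem q k₁ k₂ k₃ a b r R) (n : ℕ) :
    a (n + 1) ^ 2 * R (n + 1) * R n = r (n + 1) * (r (n + 1) + k₁) := by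
  induction n with
  | zero =>
    linear_combination R 0 * h.a_one_sq_mul_R - (r 1 - r 0) * h.r_succ_add_r 0
      - (r 0 + k₁) * h.r_zero
  | succ n ih =>
    linear_combination R (n + 1) * h.a_sq_mul_R_sub n + ih
      - (r (n + 2) - r (n + 1)) * h.r_succ_add_r (n + 1)

theorem q_pow_mul_R_mul_R (h : LadderSystem q k₁ k₂ k₃ a b r R) (n : ℕ) :
    q ^ (n + 1) * (1 - q ^ (n + 1) + r (n + 1)) * (R (n + 1) * R n) =
      k₂ * (r (n + 1) * (r (n + 1) + k₁)) := by
  rw [← h.k₂_mul_a_sq, ← h.a_sq_mul_R_mul_R]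
  ring

theorem k₂_mul_b_zero (h : LadderSystem q k₁ k₂ k₃ a b r R) : k₂ * b 0 = q * R 0 - k₃ := by
  have sum_rel := h.R_sub_sum 0
  simp only [zero_add, pow_zero, div_one, Finset.sum_range_one] at sum_rel
  linear_combination -sum_rel

theorem k₂_mul_b_succ_sub (h : LadderSystem q k₁ k₂ k₃ a b r R) (hq : q ≠ 0) (n : ℕ) :
    k₂ * (b (n + 1) - q * b n) = q ^ (n + 1) * (q * R (n + 1) - R n) := by
  have sum_rel := h.R_sub_sum n
  have sum_rel_succ := h.R_sub_sum (n + 1)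
  rw [Finset.sum_range_succ] at sum_rel_succ
  have cancel : ∀ m, k₂ * b m / q ^ m * q ^ m = k₂ * b m :=
    fun m ↦ div_mul_cancel₀ _ (pow_ne_zero m hq)
  linear_combination q ^ (n + 1) * (sum_rel - sum_rel_succ) - cancel (n + 1) + q * cancel n

theorem k₂_mul_b_mul_one_add_r (h : LadderSystem q k₁ k₂ k₃ a b r R) (hq : q ≠ 0) (n : ℕ) :
    k₂ * b n * (1 + r (n + 1)) =
      q ^ (2 * n + 1) * R n - q ^ (n + 1) * (1 - q ^ (n + 1) + r (n + 1)) * R (n + 1)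
        - k₃ * q ^ n := by
  induction n with
  | zero =>
    linear_combination h.k₂_mul_b_zero + k₂ * h.a_one_sq_mul_R - R 1 * h.k₂_mul_a_sq 1
      + k₂ * b 0 * h.r_zero
  | succ n ih =>
    linear_combination q * ih + (1 + r (n + 1)) * h.k₂_mul_b_succ_sub hq n
      + k₂ * h.a_sq_mul_R_sub n - R (n + 2) * h.k₂_mul_a_sq (n + 2) + R n * h.k₂_mul_a_sq (n + 1)

theorem q_pow_mul_R_sq (h : LadderSystem q k₁ k₂ k₃ a b r R) (hq : q ≠ 0) (n : ℕ) :
    q ^ (2 * n + 1) * R n ^ 2 =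
      k₃ * q ^ n * R n - k₂ * ((r (n + 1) + 1) * (r n + 1) - (1 - k₁)) := by
  linear_combination -R n * h.k₂_mul_b_mul_one_add_r hq n + k₂ * (1 + r (n + 1)) * h.r_succ_add_r n
    + k₂ * h.a_sq_mul_R_mul_R n - R (n + 1) * R n * h.k₂_mul_a_sq (n + 1)

end LadderSystem

theorem ladder_example1_rn_equation_general {K : Type*} [Field K] {q k₁ k₂ : K}
    {a b r R : ℕ → K} (h : LadderSystem q k₁ k₂ 0 a b r R) (hq : q ≠ 0) (hk₂ : k₂ ≠ 0) (n : ℕ) :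
    r (n + 1) ^ 2 * (r (n + 1) + k₁) ^ 2 =
      1 / q ^ (2 * n + 2) * (r (n + 1) + 1 - q ^ (n + 1)) ^ 2 *
        ((r (n + 1) + 1) * (r (n + 2) + 1) - (1 - k₁)) *
        ((r (n + 1) + 1) * (r n + 1) - (1 - k₁)) := by
  set E := (r (n + 1) + 1) * (r n + 1) - (1 - k₁)
  set F := (r (n + 1) + 1) * (r (n + 2) + 1) - (1 - k₁)
  set s := r (n + 1) + 1 - q ^ (n + 1)
  have R_sq : q ^ (2 * n + 1) * R n ^ 2 = -(k₂ * E) := by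
    linear_combination h.q_pow_mul_R_sq hq n
  have R_succ_sq : q ^ (2 * n + 3) * R (n + 1) ^ 2 = -(k₂ * F) := by
    linear_combination h.q_pow_mul_R_sq hq (n + 1)
  have R_mul_R : k₂ * (r (n + 1) * (r (n + 1) + k₁)) = q ^ (n + 1) * s * (R (n + 1) * R n) := by
    linear_combination -h.q_pow_mul_R_mul_R n
  have cleared : r (n + 1) ^ 2 * (r (n + 1) + k₁) ^ 2 * q ^ (2 * n + 2) = s ^ 2 * F * E := by
    refine mul_left_cancel₀ (pow_ne_zero 2 hk₂) ?_
    calc k₂ ^ 2 * (r (n + 1) ^ 2 * (r (n + 1) + k₁) ^ 2 * q ^ (2 * n + 2))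
        = (k₂ * (r (n + 1) * (r (n + 1) + k₁))) ^ 2 * q ^ (2 * n + 2) := by ring
      _ = s ^ 2 * (q ^ (2 * n + 3) * R (n + 1) ^ 2) * (q ^ (2 * n + 1) * R n ^ 2) := by
        rw [R_mul_R]; ring
      _ = k₂ ^ 2 * (s ^ 2 * F * E) := by rw [R_succ_sq, R_sq]; ring
  rw [eq_div_of_mul_eq (pow_ne_zero _ hq) cleared]
  ring

/-- Example 1 with c = -1: under the ladder system with k₁ = 1 - q^{-α},
k₂ = q^{1-α}, k₃ = 0 (α > 0), the sequence r_n satisfies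
r_n²(r_n+1-q^{-α})² = q^{-2n}(r_n+1-qⁿ)²((r_n+1)(r_{n+1}+1)-q^{-α})((r_n+1)(r_{n-1}+1)-q^{-α}). -/
theorem ladder_example1_rn_equation (q k₁ k₂ k₃ α : ℝ) (a b r R : ℕ → ℝ)
    (hα : 0 < α)
    (hk1def : k₁ = 1 - q ^ (-α)) (hk2def : k₂ = q ^ (1 - α)) (hk3def : k₃ = 0)
    (hq0 : 0 < q) (hq1 : q < 1)
    (hk1 : k₁ ≠ 0) (hk2 : k₂ ≠ 0)
    (ha0 : a 0 = 0) (hr0 : r 0 = 0)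
    (hcomp1 : ∀ n : ℕ, r (n + 1) + r n = -(b n * R n) - k₁)
    (hcomp2 : ∀ n : ℕ,
      R n - k₂ * b n / q ^ n - k₃ - (1 - q) * ∑ j ∈ Finset.range (n + 1), R j = 0)
    (hcomp30 : a 1 ^ 2 * R 1 = -(b 0 * (r 1 - r 0)))
    (hcomp3 : ∀ n : ℕ,
      a (n + 2) ^ 2 * R (n + 2) - a (n + 1) ^ 2 * R n =
        -(b (n + 1) * (r (n + 2) - r (n + 1))))
    (hcomp4 : ∀ n : ℕ,
      k₂ * a (n + 1) ^ 2 - k₂ * q ^ 2 * a n ^ 2 =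
        q ^ (1 + n) - q ^ (2 + n) - q ^ (2 + n) * r n + q ^ (1 + n) * r (n + 1)) :
    ∀ n : ℕ, R (n + 1) ≠ 0 → R n ≠ 0 →
      1 - q ^ (n + 1) + r (n + 1) ≠ 0 → 1 - q ^ (n + 2) + r (n + 2) ≠ 0 →
      r n * (q ^ (n + 1) - 1 - r (n + 1)) + (q ^ (n + 1) - 1) * (r (n + 1) + k₁) ≠ 0 →
      r (n + 1) ^ 2 * (r (n + 1) + 1 - q ^ (-α)) ^ 2 =
        1 / q ^ (2 * n + 2) * (r (n + 1) + 1 - q ^ (n + 1)) ^ 2 *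
          ((r (n + 1) + 1) * (r (n + 2) + 1) - q ^ (-α)) *
          ((r (n + 1) + 1) * (r n + 1) - q ^ (-α)) := by
  intro n _ _ _ _ _
  subst hk3def
  have hc : q ^ (-α) = 1 - k₁ := by rw [hk1def, sub_sub_cancel]
  rw [hc, ← sub_add, add_sub_cancel_right]
  exact ladder_example1_rn_equation_general
    ⟨ha0, hr0, hcomp1, hcomp2, hcomp30, hcomp3, hcomp4⟩ hq0.ne' hk2 n
end

section
/- Let q ∈ (0,1), α > 0, c₁ < 0, c₂ < 0, and define for x > 0 the weight w(x) = x^α (qx; q)_∞ (c₁/x; q)_∞ (qx/c₁; q)_∞ / (c₂/x; q)_∞ (all infinite products converge, and the denominator is nonzero since c₂ < 0 and x > 0). Then for every x > 0, w(x/q) = (q^{-α}/c₁)(x - 1)(x - c₂) w(x); consequently the associated potential is of the form u(y) = k₁ q/((1-q)y) + (k₂ y + k₃)/(1-q) with k₁ = 1 - (c₂/c₁) q^{-α}, k₂ = -q^{1-α}/c₁, and k₃ = (c₂ + 1) q^{1-α}/c₁. -/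
/-!
Since `(a; q)_∞ = (1 - a) (a q; q)_∞`, the theta product `θ(z) = (z; q)_∞ (q/z; q)_∞` satisfies
`θ(q z) = -z⁻¹ θ(z)`. Replacing `x` by `x / q` in the weight therefore multiplies `x ^ α` by
`q ^ (-α)`, `(q x; q)_∞` by `1 - x`, `θ(c₁ / x)` by `-x / c₁` and `1 / (c₂ / x; q)_∞` by
`1 - c₂ / x`. If the product of these factors is `ρ(x)`, then the potential is
`u(y) = q (1 - ρ(y)) / ((1 - q) y)`, and `ρ` being a quadratic polynomial gives its partial
fraction form.
-/

section QPochhammer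

variable {𝕜 : Type*} [NormedField 𝕜]

/-- The infinite `q`-Pochhammer symbol `(a; q)_∞`, an unconditionally convergent product when
`‖q‖ < 1`. -/
noncomputable def qPochhammerInf (a q : 𝕜) : 𝕜 :=
  ∏' k : ℕ, (1 - a * q ^ k)

/-- The multiplicative Jacobi theta function `θ(z; q) = (z; q)_∞ (q/z; q)_∞`, meaningful for
`z ≠ 0`. -/
noncomputable def qTheta (z q : 𝕜) : 𝕜 :=
  qPochhammerInf z q * qPochhammerInf (q / z) q

variable [CompleteSpace 𝕜] {q : 𝕜}

lemma multipliable_one_sub_mul_pow (a : 𝕜) (hq : ‖q‖ < 1) :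
    Multipliable fun k : ℕ ↦ 1 - a * q ^ k := by
  have summable_norm : Summable fun k : ℕ ↦ ‖-(a * q ^ k)‖ := by
    simpa only [norm_neg, norm_mul, norm_pow] using
      (summable_geometric_of_lt_one (norm_nonneg q) hq).mul_left ‖a‖
  simpa only [sub_eq_add_neg] using multipliable_one_add_of_summable summable_norm

lemma qPochhammerInf_eq_one_sub_mul (a : 𝕜) (hq : ‖q‖ < 1) :
    qPochhammerInf a q = (1 - a) * qPochhammerInf (a * q) q := by
  have shift (k : ℕ) : 1 - a * q * q ^ k = 1 - a * q ^ (k + 1) := by ring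
  have multipliable_tail := multipliable_one_sub_mul_pow (a * q) hq
  simp only [qPochhammerInf, shift] at multipliable_tail ⊢
  simpa only [pow_zero, mul_one] using
    tprod_eq_zero_mul' (f := fun k : ℕ ↦ 1 - a * q ^ k) multipliable_tail

lemma qTheta_mul_base {z : 𝕜} (hq : ‖q‖ < 1) (hq0 : q ≠ 0) (hz : z ≠ 0) :
    qTheta (z * q) q = -z⁻¹ * qTheta z q := by
  have inv_step : qPochhammerInf z⁻¹ q = (1 - z⁻¹) * qPochhammerInf (q / z) q := by
    rw [qPochhammerInf_eq_one_sub_mul _ hq, inv_mul_eq_div]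
  have base_div : q / (z * q) = z⁻¹ := by field_simp
  calc qTheta (z * q) q
      = (1 - z⁻¹) * qPochhammerInf (z * q) q * qPochhammerInf (q / z) q := by
        rw [qTheta, base_div, inv_step]; ring
    _ = -z⁻¹ * ((1 - z) * qPochhammerInf (z * q) q * qPochhammerInf (q / z) q) := by
        field_simp; ring
    _ = -z⁻¹ * qTheta z q := by
        rw [qTheta, qPochhammerInf_eq_one_sub_mul z hq]

end QPochhammer

section Potential

variable {K : Type*} [Field K] {q : K}

/-- The Jackson `q`-derivative `D_q f`, meaningful for `x ≠ 0` and `q ≠ 1`. -/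
def qDeriv (q : K) (f : K → K) (x : K) : K :=
  (f x - f (q * x)) / (x * (1 - q))

lemma neg_potential_mul_eq_qDeriv {w : K → K} {x ρ : K} (hq0 : q ≠ 0)
    (ratio : w x = ρ * w (q * x)) :
    -(q * (1 - ρ) / ((1 - q) * (q * x))) * w (q * x) = qDeriv q w x := by
  rw [qDeriv, ratio, mul_left_comm, mul_div_mul_left _ _ hq0]
  ring

lemma potential_of_quadratic_ratio {y : K} (a b c : K) (hy : y ≠ 0) :
    q * (1 - a * ((y - b) * (y - c))) / ((1 - q) * y) =
      (1 - a * (b * c)) * q / ((1 - q) * y) +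
        (-(q * a) * y + (b + c) * (q * a)) / (1 - q) := by
  rw [← mul_div_mul_right (-(q * a) * y + (b + c) * (q * a)) (1 - q) hy, ← add_div]
  ring

end Potential

section Weight

variable {q α c₁ c₂ x : ℝ}

/-- The weight `x^α (q x; q)_∞ (c₁/x; q)_∞ (q x/c₁; q)_∞ / (c₂/x; q)_∞` on `x > 0`, with the two
factors containing `c₁` combined into `θ(c₁/x; q)`. -/
noncomputable def generalizedLittleQLaguerreWeight (q α c₁ c₂ x : ℝ) : ℝ :=
  x ^ α * qPochhammerInf (x * q) q * qTheta (c₁ / x) q / qPochhammerInf (c₂ / x) q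

lemma generalizedLittleQLaguerreWeight_eq_tprod (q α c₁ c₂ x : ℝ) :
    generalizedLittleQLaguerreWeight q α c₁ c₂ x =
      x ^ α * (∏' k : ℕ, (1 - q ^ (k + 1) * x)) *
          (∏' k : ℕ, (1 - c₁ / x * q ^ k)) * (∏' k : ℕ, (1 - q * x / c₁ * q ^ k)) /
        ∏' k : ℕ, (1 - c₂ / x * q ^ k) := by
  have shift (k : ℕ) : q ^ (k + 1) * x = x * q * q ^ k := by ring
  simp only [generalizedLittleQLaguerreWeight, qTheta, qPochhammerInf, shift, div_div_eq_mul_div,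
    mul_assoc]

lemma generalizedLittleQLaguerreWeight_div (hq0 : 0 < q) (hq1 : q < 1) (hc1 : c₁ ≠ 0)
    (hx : 0 < x) (hxc2 : x ≠ c₂) :
    generalizedLittleQLaguerreWeight q α c₁ c₂ (x / q) =
      q ^ (-α) / c₁ * ((x - 1) * (x - c₂)) * generalizedLittleQLaguerreWeight q α c₁ c₂ x := by
  have hq : ‖q‖ < 1 := by rwa [Real.norm_of_nonneg hq0.le]
  have power : (x / q) ^ α = q ^ (-α) * x ^ α := by
    rw [Real.div_rpow hx.le hq0.le, Real.rpow_neg hq0.le, div_eq_inv_mul]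
  have numerator : qPochhammerInf (x / q * q) q = (1 - x) * qPochhammerInf (x * q) q := by
    rw [div_mul_cancel₀ x hq0.ne', qPochhammerInf_eq_one_sub_mul x hq]
  have theta : qTheta (c₁ / (x / q)) q = -(x / c₁) * qTheta (c₁ / x) q := by
    rw [div_div_eq_mul_div, mul_div_right_comm,
      qTheta_mul_base hq hq0.ne' (div_ne_zero hc1 hx.ne'), inv_div]
  have denominator :
      (qPochhammerInf (c₂ / (x / q)) q)⁻¹ = (1 - c₂ / x) * (qPochhammerInf (c₂ / x) q)⁻¹ := by
    have one_sub_ne_zero : 1 - c₂ / x ≠ 0 := by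
      rw [one_sub_div hx.ne']
      exact div_ne_zero (sub_ne_zero.mpr hxc2) hx.ne'
    rw [qPochhammerInf_eq_one_sub_mul (c₂ / x) hq, mul_inv, mul_inv_cancel_left₀ one_sub_ne_zero,
      div_div_eq_mul_div, mul_div_right_comm]
  have factors : q ^ (-α) * (1 - x) * -(x / c₁) * (1 - c₂ / x) =
      q ^ (-α) / c₁ * ((x - 1) * (x - c₂)) := by
    have := hx.ne'
    field_simp
    ring
  rw [← factors]
  simp only [generalizedLittleQLaguerreWeight, div_eq_mul_inv _ (qPochhammerInf _ _), power,
    numerator, theta, denominator]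
  ring

end Weight

/-- The points `c₂ q^k` are the zeros of the denominator `(c₂/x; q)_∞`, where division
would return the junk value `0`. -/
theorem example2_weight_ratio_and_potential_general (q α c₁ c₂ : ℝ) (w : ℝ → ℝ)
    (hq0 : 0 < q) (hq1 : q < 1) (hc1 : c₁ ≠ 0)
    (hw : ∀ x : ℝ, 0 < x → (∀ k : ℕ, x ≠ c₂ * q ^ k) →
      w x = x ^ α * (∏' k : ℕ, (1 - q ^ (k + 1) * x)) *
          (∏' k : ℕ, (1 - c₁ / x * q ^ k)) * (∏' k : ℕ, (1 - q * x / c₁ * q ^ k)) /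
          ∏' k : ℕ, (1 - c₂ / x * q ^ k)) :
    (∀ x : ℝ, 0 < x → (∀ k : ℕ, x ≠ c₂ * q ^ k) →
        w (x / q) = q ^ (-α) / c₁ * ((x - 1) * (x - c₂)) * w x) ∧
      ∀ x : ℝ, 0 < x → (∀ k : ℕ, q * x ≠ c₂ * q ^ k) →
        -((1 - c₂ / c₁ * q ^ (-α)) * q / ((1 - q) * (q * x)) +
              ((-(q ^ (1 - α) / c₁)) * (q * x) + (c₂ + 1) * q ^ (1 - α) / c₁) / (1 - q)) *
            w (q * x) =
          (w x - w (q * x)) / (x * (1 - q)) := by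
  simp only [← generalizedLittleQLaguerreWeight_eq_tprod] at hw
  have ratio (x : ℝ) (hx : 0 < x) (off_poles : ∀ k : ℕ, x ≠ c₂ * q ^ k) :
      w (x / q) = q ^ (-α) / c₁ * ((x - 1) * (x - c₂)) * w x := by
    have off_poles_div (k : ℕ) : x / q ≠ c₂ * q ^ k := by
      rw [Ne, div_eq_iff hq0.ne', mul_assoc, ← pow_succ]
      exact off_poles (k + 1)
    rw [hw x hx off_poles, hw (x / q) (div_pos hx hq0) off_poles_div,
      generalizedLittleQLaguerreWeight_div hq0 hq1 hc1 hx (by simpa using off_poles 0)]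
  refine ⟨ratio, fun x hx off_poles ↦ ?_⟩
  have ratio_mul := ratio (q * x) (mul_pos hq0 hx) off_poles
  rw [mul_div_cancel_left₀ x hq0.ne'] at ratio_mul
  have rpow_one_sub : q ^ (1 - α) = q * q ^ (-α) := by
    rw [sub_eq_add_neg, Real.rpow_add hq0, Real.rpow_one]
  rw [← qDeriv, ← neg_potential_mul_eq_qDeriv hq0.ne' ratio_mul,
    potential_of_quadratic_ratio _ _ _ (mul_pos hq0 hx).ne', rpow_one_sub]
  ring

/-- Example 2 weight w(x) = x^α (qx;q)_∞ (c₁/x;q)_∞ (qx/c₁;q)_∞ / (c₂/x;q)_∞: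
one has w(x/q) = (q^{-α}/c₁)(x-1)(x-c₂) w(x) for x > 0, and consequently the
potential relation holds with k₁ = 1 - (c₂/c₁)q^{-α}, k₂ = -q^{1-α}/c₁,
k₃ = (c₂+1)q^{1-α}/c₁. -/
theorem example2_weight_ratio_and_potential (q α c₁ c₂ : ℝ) (w : ℝ → ℝ)
    (hq0 : 0 < q) (hq1 : q < 1) (hα : 0 < α) (hc1 : c₁ < 0) (hc2 : c₂ < 0)
    (hw : ∀ x : ℝ, 0 < x →
      w x = x ^ α * (∏' k : ℕ, (1 - q ^ (k + 1) * x)) *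
          (∏' k : ℕ, (1 - c₁ / x * q ^ k)) * (∏' k : ℕ, (1 - q * x / c₁ * q ^ k)) /
          ∏' k : ℕ, (1 - c₂ / x * q ^ k)) :
    (∀ x : ℝ, 0 < x → w (x / q) = q ^ (-α) / c₁ * ((x - 1) * (x - c₂)) * w x) ∧
      ∀ x : ℝ, 0 < x →
        -((1 - c₂ / c₁ * q ^ (-α)) * q / ((1 - q) * (q * x)) +
              ((-(q ^ (1 - α) / c₁)) * (q * x) + (c₂ + 1) * q ^ (1 - α) / c₁) / (1 - q)) *
            w (q * x) =
          (w x - w (q * x)) / (x * (1 - q)) := by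
  have off_poles {x : ℝ} (hx : 0 < x) (k : ℕ) : x ≠ c₂ * q ^ k :=
    ((mul_neg_of_neg_of_pos hc2 (pow_pos hq0 k)).trans hx).ne'
  exact (example2_weight_ratio_and_potential_general q α c₁ c₂ w hq0 hq1 hc1.ne
    fun x hx _ ↦ hw x hx).imp (fun ratio x hx ↦ ratio x hx (off_poles hx))
      fun potential x hx ↦ potential x hx (off_poles (mul_pos hq0 hx))
end
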